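/- arXiv:1608.04756 — 9 statements merged into one kernel-verified Lean document; each statement's English description precedes it below -/
import Mathlib

section
/- Let K be a field of characteristic zero equipped with a derivation δ : K → K, let n be a natural number, and let x, y ∈ K with x ≠ 0. If δ(x) = (n+1)·y − n and δ(y) = y·(y−1)/x, then δ(yⁿ·(y−1)/x) = 0; that is, yⁿ·(y−1)/x is a constant of the differential field, so the map (x,y) ↦ yⁿ(y−1)/x is a rational first integral of the vector field x' = n·y + y − n, y' = y(y−1)/x. -/
/-- For the vector field `x' = n·y + y − n`, `y' = y(y−1)/x`, the rational function
`yⁿ·(y−1)/x` is a first integral: its derivative under `δ` vanishes. -/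
theorem rational_first_integral
    {K : Type*} [Field K] [CharZero K] (δ : K → K)
    (hadd : ∀ a b : K, δ (a + b) = δ a + δ b)
    (hleib : ∀ a b : K, δ (a * b) = a * δ b + δ a * b)
    (n : ℕ) (x y : K) (hx : x ≠ 0)
    (hdx : δ x = ((n : K) + 1) * y - (n : K))
    (hdy : δ y = y * (y - 1) / x) :
    δ (y ^ n * (y - 1) / x) = 0 := by
  have h1 : δ 1 = 0 := by
    have h := hleib 1 1
    simp only [mul_one, one_mul] at h
    linear_combination -h
  have hpow : ∀ m : ℕ, δ (y ^ m) = (m : K) * y ^ m * ((y - 1) / x) := by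
    intro m
    induction m with
    | zero => simp [h1]
    | succ k ih =>
      rw [pow_succ, hleib, ih, hdy]
      push_cast
      ring
  have hy1 : δ (y - 1) = δ y := by
    have h := hadd (y - 1) 1
    rw [sub_add_cancel, h1, add_zero] at h
    exact h.symm
  have h := hleib (y ^ n * (y - 1) / x) x
  rw [div_mul_cancel₀ _ hx, hleib, hpow, hy1, hdy, hdx] at h
  have h2 : δ (y ^ n * (y - 1) / x) * x = 0 := by
    linear_combination -h
  exact (mul_eq_zero.mp h2).resolve_right hx
end

section
/- Let n be a natural number, let x, y : ℂ → ℂ, and let t₀ ∈ ℂ. Suppose x has derivative (n+1)·y(t₀) − n at t₀, y has derivative y(t₀)·(y(t₀) − 1)/x(t₀) at t₀, and x(t₀) ≠ 0. Then the function t ↦ y(t)ⁿ·(y(t) − 1)/x(t) has derivative 0 at t₀. -/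
/-- Along complex-analytic solutions of `x' = n·y + y − n`, `y' = y(y−1)/x`,
the function `t ↦ y(t)ⁿ·(y(t)−1)/x(t)` has derivative `0`. -/
theorem first_integral_hasDerivAt_zero
    (n : ℕ) (x y : ℂ → ℂ) (t₀ : ℂ)
    (hx : HasDerivAt x (((n : ℂ) + 1) * y t₀ - (n : ℂ)) t₀)
    (hy : HasDerivAt y (y t₀ * (y t₀ - 1) / x t₀) t₀)
    (hx0 : x t₀ ≠ 0) :
    HasDerivAt (fun t => y t ^ n * (y t - 1) / x t) 0 t₀ := by
  have h := ((hy.pow n).mul (hy.sub_const 1)).div hx hx0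
  refine HasDerivAt.congr_deriv h ?_
  rw [div_eq_zero_iff]
  left
  simp only [Pi.mul_apply, Pi.pow_apply]
  rcases n with _ | k
  · field_simp
    simp
  · simp only [Nat.add_sub_cancel]
    push_cast
    field_simp
    ring
end

section
/- Let c ∈ ℝ, let x, y : ℝ → ℝ, and let t₀ ∈ ℝ. Suppose x has derivative c·y(t₀) + y(t₀) − c at t₀, y has derivative y(t₀)·(y(t₀) − 1)/x(t₀) at t₀, x(t₀) > 0, and 0 < y(t₀) < 1. Then the function t ↦ c·log(y(t)) + log(1 − y(t)) − log(x(t)) has derivative 0 at t₀. In particular the relation c₁ + log x = c·log y + log(1 − y) is preserved (to first order) along solutions of the system x' = c·y + y − c, y' = y(y−1)/x. -/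
/-- Along real solutions of `x' = c·y + y − c`, `y' = y(y−1)/x` (with `x > 0`,
`0 < y < 1`), the function `t ↦ c·log(y t) + log(1 − y t) − log(x t)` has
derivative `0`. -/
theorem log_relation_hasDerivAt_zero
    (c : ℝ) (x y : ℝ → ℝ) (t₀ : ℝ)
    (hx : HasDerivAt x (c * y t₀ + y t₀ - c) t₀)
    (hy : HasDerivAt y (y t₀ * (y t₀ - 1) / x t₀) t₀)
    (hxpos : 0 < x t₀) (hy0 : 0 < y t₀) (hy1 : y t₀ < 1) :
    HasDerivAt (fun t => c * Real.log (y t) + Real.log (1 - y t) - Real.log (x t)) 0 t₀ := by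
  have h1 : (1 - y t₀) ≠ 0 := by linarith
  have hx0 : x t₀ ≠ 0 := hxpos.ne'
  have hy0' : y t₀ ≠ 0 := hy0.ne'
  have h := (((hy.log hy0').const_mul c).add ((hy.const_sub 1).log h1)).sub (hx.log hx0)
  refine h.congr_deriv ?_
  field_simp
  ring
end

section
/- Let c ∈ ℝ, let x, y : ℝ → ℝ be differentiable functions on a preconnected open set U ⊆ ℝ such that for every t ∈ U: x'(t) = c·y(t) + y(t) − c, y'(t) = y(t)·(y(t) − 1)/x(t), x(t) > 0, and 0 < y(t) < 1. Then there exists a constant c₁ ∈ ℝ such that c₁ + log(x(t)) = c·log(y(t)) + log(1 − y(t)) for all t ∈ U. -/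
/-- Solutions of the system `x' = c·y + y − c`, `y' = y(y−1)/x` on a preconnected
open set satisfy the relation `c₁ + log x = c·log y + log(1 − y)` for some
constant `c₁`. -/
theorem log_relation_on_preconnected
    (c : ℝ) (x y : ℝ → ℝ) (U : Set ℝ) (hU : IsOpen U) (hUc : IsPreconnected U)
    (hx : ∀ t ∈ U, HasDerivAt x (c * y t + y t - c) t)
    (hy : ∀ t ∈ U, HasDerivAt y (y t * (y t - 1) / x t) t)
    (hxpos : ∀ t ∈ U, 0 < x t)
    (hy0 : ∀ t ∈ U, 0 < y t) (hy1 : ∀ t ∈ U, y t < 1) :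
    ∃ c₁ : ℝ, ∀ t ∈ U,
      c₁ + Real.log (x t) = c * Real.log (y t) + Real.log (1 - y t) := by
  have key : ∀ t ∈ U, HasDerivAt
      (fun t => c * Real.log (y t) + Real.log (1 - y t) - Real.log (x t)) 0 t := by
    intro t ht
    have h1 := (hxpos t ht).ne'
    have h2 := (hy0 t ht).ne'
    have h3 : 1 - y t ≠ 0 := (sub_pos.mpr (hy1 t ht)).ne'
    have h := ((((hy t ht).log h2).const_mul c).add
      (((hy t ht).const_sub 1).log h3)).sub ((hx t ht).log h1)
    refine h.congr_deriv ?_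
    field_simp
    ring
  obtain ⟨a, ha⟩ := hU.exists_is_const_of_deriv_eq_zero hUc
    (fun t ht => (key t ht).differentiableAt.differentiableWithinAt)
    (fun t ht => (key t ht).deriv)
  refine ⟨a, fun t ht => ?_⟩
  have := ha t ht
  linarith
end

section
/- Let K be a field of characteristic zero equipped with a derivation δ : K → K, and let F be a subfield of K closed under δ (a differential subfield). Let c ∈ F with δ(c) = 0 and c ≠ −1, and let x, y ∈ K with x ≠ 0, y ≠ 0, y ≠ 1, satisfying δ(x) = c·y + y − c and δ(y) = y·(y−1)/x. Then x ∈ F if and only if y ∈ F. -/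
/-- For the system `δ x = c·y + y − c`, `δ y = y(y−1)/x` with `c ≠ −1` a constant
in a differential subfield `F`, we have `x ∈ F` iff `y ∈ F`. -/
theorem mem_subfield_iff
    {K : Type*} [Field K] [CharZero K] (δ : K → K)
    (hadd : ∀ a b : K, δ (a + b) = δ a + δ b)
    (hleib : ∀ a b : K, δ (a * b) = a * δ b + δ a * b)
    (F : Subfield K) (hF : ∀ a ∈ F, δ a ∈ F)
    (c : K) (hcF : c ∈ F) (hc : δ c = 0) (hc1 : c ≠ -1)
    (x y : K) (hx0 : x ≠ 0) (hy0 : y ≠ 0) (hy1 : y ≠ 1)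
    (hdx : δ x = c * y + y - c)
    (hdy : δ y = y * (y - 1) / x) :
    x ∈ F ↔ y ∈ F := by
  have h1 : c + 1 ≠ 0 := fun h => hc1 (eq_neg_of_add_eq_zero_left h)
  have h2 : y - 1 ≠ 0 := sub_ne_zero.mpr hy1
  constructor
  · intro hx
    have e : y = (δ x + c) / (c + 1) := by
      rw [hdx, eq_div_iff h1]; ring
    rw [e]
    exact F.div_mem (F.add_mem (hF x hx) hcF) (F.add_mem hcF F.one_mem)
  · intro hy
    have e : x = y * (y - 1) / δ y := by
      rw [hdy]; field_simp
    rw [e]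
    exact F.div_mem (F.mul_mem hy (F.sub_mem hy F.one_mem)) (hF y hy)
end

section
/- Let K be a field of characteristic zero equipped with a derivation δ : K → K, let t ∈ K with δ(t) = 1, and let v₁, v₂, v₃ ∈ K be constants (δ(vᵢ) = 0) with v₁ + v₂ + v₃ = 0. Suppose q, p ∈ K with q ≠ 0 satisfy the Hamiltonian system δ(q) = 2pq − q² − 2tq + 2(v₁ − v₂) and δ(p) = 2pq − p² + 2tp + 2(v₁ − v₃). Then, with α = 3v₃ + 1 and β = −2(v₂ − v₁)², the element q satisfies the fourth Painlevé equation: δ(δ(q)) = (δ(q))²/(2q) + (3/2)·q³ + 4t·q² + 2(t² − α)·q + β/q. -/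
/-- If `(q, p)` solves the Hamiltonian system `S_IV(v₁,v₂,v₃)`, then `q` solves
the fourth Painlevé equation `P_IV(α, β)` with `α = 3v₃ + 1` and
`β = −2(v₂ − v₁)²`. -/
theorem SIV_implies_PIV
    {K : Type*} [Field K] [CharZero K] (δ : K → K)
    (hadd : ∀ a b : K, δ (a + b) = δ a + δ b)
    (hleib : ∀ a b : K, δ (a * b) = a * δ b + δ a * b)
    (t : K) (ht : δ t = 1)
    (v₁ v₂ v₃ : K) (hv₁ : δ v₁ = 0) (hv₂ : δ v₂ = 0) (hv₃ : δ v₃ = 0)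
    (hsum : v₁ + v₂ + v₃ = 0)
    (q p : K) (hq0 : q ≠ 0)
    (hq : δ q = 2 * p * q - q ^ 2 - 2 * t * q + 2 * (v₁ - v₂))
    (hp : δ p = 2 * p * q - p ^ 2 + 2 * t * p + 2 * (v₁ - v₃)) :
    δ (δ q) = (δ q) ^ 2 / (2 * q) + (3 / 2 : K) * q ^ 3 + 4 * t * q ^ 2
      + 2 * (t ^ 2 - (3 * v₃ + 1)) * q + (-2 * (v₂ - v₁) ^ 2) / q := by
  have h0 : δ 0 = 0 := by
    have h := hadd 0 0
    rw [add_zero] at h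
    linear_combination -h
  have h1 : δ 1 = 0 := by
    have h := hleib 1 1
    rw [one_mul] at h
    linear_combination -h
  have hneg : ∀ a, δ (-a) = -δ a := by
    intro a
    have h := hadd a (-a)
    rw [add_neg_cancel, h0] at h
    linear_combination -h
  have hsub : ∀ a b, δ (a - b) = δ a - δ b := by
    intro a b
    rw [sub_eq_add_neg, hadd, hneg, sub_eq_add_neg]
  have h2 : δ 2 = 0 := by
    rw [← one_add_one_eq_two, hadd, h1, add_zero]
  have hqq : δ (δ q) = 2 * δ p * q + (2 * p - 2 * q - 2 * t) * δ q - 2 * q := by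
    have e := congrArg δ hq
    rw [e]
    simp only [hadd, hsub, hleib, pow_two, h2, ht, hv₁, hv₂]
    ring
  have hv : v₃ = -v₁ - v₂ := by linear_combination hsum
  rw [hqq, hp, hq, hv]
  field_simp
  ring
end

section
/- Let K be a field of characteristic zero equipped with a derivation δ : K → K, let t ∈ K with δ(t) = 1, and let v₁, v₂, v₃ ∈ K be constants (δ(vᵢ) = 0) with v₁ + v₂ + v₃ = 0. Set α = 3v₃ + 1 and β = −2(v₂ − v₁)². Suppose q ∈ K with q ≠ 0 satisfies the fourth Painlevé equation δ(δ(q)) = (δ(q))²/(2q) + (3/2)·q³ + 4t·q² + 2(t² − α)·q + β/q, and define p = (δ(q) + q² + 2tq − 2(v₁ − v₂))/(2q). Then δ(q) = 2pq − q² − 2tq + 2(v₁ − v₂) and δ(p) = 2pq − p² + 2tp + 2(v₁ − v₃); that is, (q,p) is a solution of the system S_IV(v₁,v₂,v₃), so the solutions of P_IV(α,β) are precisely the q-components of solutions of S_IV(v₁,v₂,v₃). -/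
/-- If `q` solves the fourth Painlevé equation `P_IV(α, β)` with `α = 3v₃ + 1`
and `β = −2(v₂ − v₁)²`, then setting
`p = (δ q + q² + 2tq − 2(v₁ − v₂))/(2q)`, the pair `(q, p)` solves the system
`S_IV(v₁,v₂,v₃)`. -/
theorem PIV_implies_SIV
    {K : Type*} [Field K] [CharZero K] (δ : K → K)
    (hadd : ∀ a b : K, δ (a + b) = δ a + δ b)
    (hleib : ∀ a b : K, δ (a * b) = a * δ b + δ a * b)
    (t : K) (ht : δ t = 1)
    (v₁ v₂ v₃ : K) (hv₁ : δ v₁ = 0) (hv₂ : δ v₂ = 0) (hv₃ : δ v₃ = 0)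
    (hsum : v₁ + v₂ + v₃ = 0)
    (q : K) (hq0 : q ≠ 0)
    (hPIV : δ (δ q) = (δ q) ^ 2 / (2 * q) + (3 / 2 : K) * q ^ 3 + 4 * t * q ^ 2
      + 2 * (t ^ 2 - (3 * v₃ + 1)) * q + (-2 * (v₂ - v₁) ^ 2) / q) :
    δ q = 2 * ((δ q + q ^ 2 + 2 * t * q - 2 * (v₁ - v₂)) / (2 * q)) * q
        - q ^ 2 - 2 * t * q + 2 * (v₁ - v₂) ∧
    δ ((δ q + q ^ 2 + 2 * t * q - 2 * (v₁ - v₂)) / (2 * q))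
      = 2 * ((δ q + q ^ 2 + 2 * t * q - 2 * (v₁ - v₂)) / (2 * q)) * q
        - ((δ q + q ^ 2 + 2 * t * q - 2 * (v₁ - v₂)) / (2 * q)) ^ 2
        + 2 * t * ((δ q + q ^ 2 + 2 * t * q - 2 * (v₁ - v₂)) / (2 * q))
        + 2 * (v₁ - v₃) := by
  have h2 : (2 : K) ≠ 0 := two_ne_zero
  have h1 : δ 1 = 0 := by
    have h := hleib 1 1
    simp only [mul_one, one_mul] at h
    linear_combination -h
  have hδ2 : δ 2 = 0 := by
    have h := hadd 1 1
    rw [h1, one_add_one_eq_two] at h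
    simpa using h
  have hsub : ∀ a b : K, δ (a - b) = δ a - δ b := by
    intro a b
    have h := hadd (a - b) b
    rw [sub_add_cancel] at h
    linear_combination -h
  refine ⟨by field_simp; ring, ?_⟩
  have hp : (δ q + q ^ 2 + 2 * t * q - 2 * (v₁ - v₂)) / (2 * q) * (2 * q)
      = δ q + q ^ 2 + 2 * t * q - 2 * (v₁ - v₂) := by
    field_simp
  generalize (δ q + q ^ 2 + 2 * t * q - 2 * (v₁ - v₂)) / (2 * q) = p at hp ⊢
  have hd := congrArg δ hp
  simp only [hadd, hsub, hleib, pow_two, hδ2, hv₁, hv₂, ht] at hd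
  have hP : 2 * q * δ (δ q) = (δ q) ^ 2 + 3 * q ^ 4 + 8 * t * q ^ 3
      + 4 * (t ^ 2 - (3 * v₃ + 1)) * q ^ 2 - 4 * (v₂ - v₁) ^ 2 := by
    rw [hPIV]
    field_simp
    ring
  have hdq : δ q = 2 * p * q - q ^ 2 - 2 * t * q + 2 * (v₁ - v₂) := by
    linear_combination -hp
  have hv : v₃ = -v₁ - v₂ := by linear_combination hsum
  have hq : 4 * q ^ 2 ≠ 0 := mul_ne_zero (by norm_num) (pow_ne_zero 2 hq0)
  generalize δ (δ q) = e at hd hP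
  generalize δ q = d at hd hP hdq
  subst hdq
  subst hv
  apply mul_left_cancel₀ hq
  linear_combination 2 * q * hd + hP
end

section
/- Let K be a field of characteristic zero equipped with a derivation δ : K → K, let t ∈ K with δ(t) = 1, and let v₁, v₂, v₃, v₄ ∈ K be constants (δ(vᵢ) = 0) with v₁ + v₂ + v₃ + v₄ = 0. Suppose Q, P ∈ K with Q ≠ 1 satisfy t·δ(Q) = 2Q(Q−1)²P + (3v₁ + v₂)Q² − (t + 4v₁)Q + v₁ − v₂. Define q = Q/(Q−1) and p = −(Q−1)²·P + (v₃ − v₁)(Q−1). Then t·δ(q) = 2q²p − 2qp + t·q² − t·q + (v₁ − v₂ − v₃ + v₄)·q + v₂ − v₁. -/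
/-- Under the substitution `q = Q/(Q−1)`, `p = −(Q−1)²P + (v₃−v₁)(Q−1)`, the
first equation of the Painlevé V Hamiltonian system transforms to
`t·q' = 2q²p − 2qp + tq² − tq + (v₁−v₂−v₃+v₄)q + v₂ − v₁`. -/
theorem painleveV_substitution_first
    {K : Type*} [Field K] [CharZero K] (δ : K → K)
    (hadd : ∀ a b : K, δ (a + b) = δ a + δ b)
    (hleib : ∀ a b : K, δ (a * b) = a * δ b + δ a * b)
    (t : K) (ht : δ t = 1)
    (v₁ v₂ v₃ v₄ : K) (hv₁ : δ v₁ = 0) (hv₂ : δ v₂ = 0) (hv₃ : δ v₃ = 0)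
    (hv₄ : δ v₄ = 0) (hsum : v₁ + v₂ + v₃ + v₄ = 0)
    (Q P : K) (hQ1 : Q ≠ 1)
    (hQ : t * δ Q = 2 * Q * (Q - 1) ^ 2 * P + (3 * v₁ + v₂) * Q ^ 2
      - (t + 4 * v₁) * Q + v₁ - v₂) :
    t * δ (Q / (Q - 1))
      = 2 * (Q / (Q - 1)) ^ 2 * (-(Q - 1) ^ 2 * P + (v₃ - v₁) * (Q - 1))
        - 2 * (Q / (Q - 1)) * (-(Q - 1) ^ 2 * P + (v₃ - v₁) * (Q - 1))
        + t * (Q / (Q - 1)) ^ 2 - t * (Q / (Q - 1))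
        + (v₁ - v₂ - v₃ + v₄) * (Q / (Q - 1)) + v₂ - v₁ := by
  have hne : Q - 1 ≠ 0 := sub_ne_zero.mpr hQ1
  have h1 : δ 1 = 0 := by
    have h := hleib 1 1
    simp only [mul_one, one_mul] at h
    linear_combination -h
  have hd : δ (Q - 1) = δ Q := by
    have h := hadd (Q - 1) 1
    rw [sub_add_cancel, h1, add_zero] at h
    exact h.symm
  have hq : δ (Q / (Q - 1)) = -δ Q / (Q - 1) ^ 2 := by
    have h := hleib (Q / (Q - 1)) (Q - 1)
    rw [div_mul_cancel₀ Q hne, hd] at h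
    have h2 : δ (Q / (Q - 1)) * (Q - 1) = δ Q - Q / (Q - 1) * δ Q := by
      linear_combination -h
    have h3 : δ (Q / (Q - 1)) = (δ Q - Q / (Q - 1) * δ Q) / (Q - 1) :=
      eq_div_of_mul_eq hne h2
    rw [h3]
    field_simp
    ring
  have hl : t * δ (Q / (Q - 1)) = -(2 * Q * (Q - 1) ^ 2 * P + (3 * v₁ + v₂) * Q ^ 2
      - (t + 4 * v₁) * Q + v₁ - v₂) / (Q - 1) ^ 2 := by
    rw [hq, ← hQ]
    ring
  have hv : v₄ = -(v₁ + v₂ + v₃) := by linear_combination hsum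
  rw [hl, hv]
  field_simp
  ring
end

section
/- Let K be a field of characteristic zero equipped with a derivation δ : K → K, let t ∈ K with δ(t) = 1, and let v₁, v₂, v₃, v₄ ∈ K be constants (δ(vᵢ) = 0) with v₁ + v₂ + v₃ + v₄ = 0. Suppose Q, P ∈ K with Q ≠ 1 satisfy t·δ(Q) = 2Q(Q−1)²P + (3v₁ + v₂)Q² − (t + 4v₁)Q + v₁ − v₂ and t·δ(P) = (−3Q² + 4Q − 1)P² − 2(3v₁ + v₂)QP + (t + 4v₁)P − (v₃ − v₁)(v₄ − v₁). Define q = Q/(Q−1) and p = −(Q−1)²·P + (v₃ − v₁)(Q−1). Then t·δ(p) = −2qp² + p² − 2t·p·q + t·p − (v₁ − v₂ − v₃ + v₄)·p + (v₃ − v₁)·t. -/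
/-- Under the substitution `q = Q/(Q−1)`, `p = −(Q−1)²P + (v₃−v₁)(Q−1)`, the
second equation of the Painlevé V Hamiltonian system transforms to
`t·p' = −2qp² + p² − 2tpq + tp − (v₁−v₂−v₃+v₄)p + (v₃−v₁)t`. -/
theorem painleveV_substitution_second
    {K : Type*} [Field K] [CharZero K] (δ : K → K)
    (hadd : ∀ a b : K, δ (a + b) = δ a + δ b)
    (hleib : ∀ a b : K, δ (a * b) = a * δ b + δ a * b)
    (t : K) (ht : δ t = 1)
    (v₁ v₂ v₃ v₄ : K) (hv₁ : δ v₁ = 0) (hv₂ : δ v₂ = 0) (hv₃ : δ v₃ = 0)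
    (hv₄ : δ v₄ = 0) (hsum : v₁ + v₂ + v₃ + v₄ = 0)
    (Q P : K) (hQ1 : Q ≠ 1)
    (hQ : t * δ Q = 2 * Q * (Q - 1) ^ 2 * P + (3 * v₁ + v₂) * Q ^ 2
      - (t + 4 * v₁) * Q + v₁ - v₂)
    (hP : t * δ P = (-3 * Q ^ 2 + 4 * Q - 1) * P ^ 2 - 2 * (3 * v₁ + v₂) * Q * P
      + (t + 4 * v₁) * P - (v₃ - v₁) * (v₄ - v₁)) :
    t * δ (-(Q - 1) ^ 2 * P + (v₃ - v₁) * (Q - 1))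
      = -2 * (Q / (Q - 1)) * (-(Q - 1) ^ 2 * P + (v₃ - v₁) * (Q - 1)) ^ 2
        + (-(Q - 1) ^ 2 * P + (v₃ - v₁) * (Q - 1)) ^ 2
        - 2 * t * (-(Q - 1) ^ 2 * P + (v₃ - v₁) * (Q - 1)) * (Q / (Q - 1))
        + t * (-(Q - 1) ^ 2 * P + (v₃ - v₁) * (Q - 1))
        - (v₁ - v₂ - v₃ + v₄) * (-(Q - 1) ^ 2 * P + (v₃ - v₁) * (Q - 1))
        + (v₃ - v₁) * t := by
  have hu : Q - 1 ≠ 0 := sub_ne_zero.mpr hQ1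
  have h0 : δ 0 = 0 := by
    have h := hadd 0 0
    rw [add_zero] at h
    exact (left_eq_add.mp h)
  have h1 : δ 1 = 0 := by
    have h := hleib 1 1
    simp only [mul_one, one_mul] at h
    exact (left_eq_add.mp h)
  have hneg : ∀ a : K, δ (-a) = -δ a := by
    intro a
    have h := hadd a (-a)
    rw [add_neg_cancel, h0] at h
    linear_combination -h
  have hsub : ∀ a b : K, δ (a - b) = δ a - δ b := by
    intro a b
    rw [sub_eq_add_neg, hadd, hneg, sub_eq_add_neg]
  have hD : δ (-(Q - 1) ^ 2 * P + (v₃ - v₁) * (Q - 1))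
      = -(Q - 1) ^ 2 * δ P - 2 * (Q - 1) * δ Q * P + (v₃ - v₁) * δ Q := by
    rw [hadd, hleib, hneg, sq, hleib, hleib, hsub, hsub, h1, hv₁, hv₃]
    ring
  have hq : Q / (Q - 1) * (Q - 1) = Q := div_mul_cancel₀ Q hu
  generalize Q / (Q - 1) = q at hq ⊢
  have hv : v₄ = -(v₁ + v₂ + v₃) := by linear_combination hsum
  subst hv
  rw [hD]
  linear_combination (-(Q - 1) ^ 2) * hP + (-2 * (Q - 1) * P + (v₃ - v₁)) * hQ
    + (2 * (Q - 1) * (v₃ - v₁ - (Q - 1) * P) ^ 2 + 2 * t * (v₃ - v₁ - (Q - 1) * P)) * hq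
end
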